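/- Non-stationary phase with h-dependent phase (Proposition A.1 of the paper). Let d ≥ 1, let K ⊂ ℝ^d be compact, let h₀ ∈ (0,1], ε > 0 and C > 0. For each h ∈ (0,h₀] let a(·,h) ∈ C^∞(ℝ^d,ℂ) and φ(·,h) ∈ C^∞(ℝ^d,ℝ) be such that: (i) supp a(·,h) ⊆ K for all h; (ii) for every multi-index β there is a constant M_β with sup_{h∈(0,h₀]} sup_{x∈ℝ^d} |∂^β a(x,h)| ≤ M_β and sup_{h∈(0,h₀]} sup_{x∈K} |∂^β φ(x,h)| ≤ M_β; (iii) |∇_x φ(x,h)| ≥ C h^{1/2−ε} for all x ∈ supp a(·,h) and all h ∈ (0,h₀]. Then the oscillatory integral I_h := ∫_{ℝ^d} a(x,h) e^{i φ(x,h)/h} dx satisfies I_h = O(h^∞): for every N ∈ ℕ there exists C_N > 0 such that |I_h| ≤ C_N h^N for all h ∈ (0,h₀]. -/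

import Mathlib

open MeasureTheory Complex

/-!
The vector field `W = ∇φ / |∇φ|²` satisfies `dφ(W) = 1`, so integrating by parts along it turns
`∫ b e^{iφ/h}` into `ih ∫ div(bW) e^{iφ/h}`. Since `W` is the image of `∇φ` under the inversion
`v ↦ v / |v|²`, which is homogeneous of degree `-1`, a lower bound `|∇φ| ≳ L⁻¹` with `L ≥ 1` gives
`∂ⁿ W = O(L^(1 + n))`. Hence each integration by parts costs at most `L²`, one factor `L` for `W`
and one for the additional derivative, and gains `h`; when `L = h^(δ - 1/2)` the net gain is
`h^(2δ)`.
-/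

namespace NonstationaryPhase

open Set Filter Asymptotics EuclideanGeometry Module
open scoped ContDiff Topology InnerProductSpace

section PointwiseBounds

variable {𝕜 𝕜' E F G : Type*} [NontriviallyNormedField 𝕜]
  [NormedAddCommGroup E] [NormedSpace 𝕜 E] [NormedAddCommGroup F] [NormedSpace 𝕜 F]
  [NormedAddCommGroup G] [NormedSpace 𝕜 G]
  [NormedField 𝕜'] [NormedAlgebra 𝕜 𝕜'] [NormedSpace 𝕜' F] [IsScalarTower 𝕜 𝕜' F]

lemma exists_isOpen_contDiffOn_of_contDiffAt {f : E → F} {x : E} {n : ℕ}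
    (hf : ContDiffAt 𝕜 n f x) : ∃ u, IsOpen u ∧ x ∈ u ∧ ContDiffOn 𝕜 n f u := by
  obtain ⟨u, hu, hu_open, hxu⟩ := eventually_nhds_iff.1 (hf.eventually (by simp))
  exact ⟨u, hu_open, hxu, fun y hy => (hu y hy).contDiffWithinAt⟩

lemma norm_iteratedFDeriv_smul_le_of_contDiffAt {f : E → 𝕜'} {g : E → F} {x : E} {n : ℕ}
    (hf : ContDiffAt 𝕜 n f x) (hg : ContDiffAt 𝕜 n g x) :
    ‖iteratedFDeriv 𝕜 n (fun y => f y • g y) x‖ ≤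
      ∑ m ∈ Finset.range (n + 1), (n.choose m : ℝ) * ‖iteratedFDeriv 𝕜 m f x‖ *
        ‖iteratedFDeriv 𝕜 (n - m) g x‖ := by
  obtain ⟨u, hu, hxu, hfu⟩ := exists_isOpen_contDiffOn_of_contDiffAt hf
  obtain ⟨v, hv, hxv, hgv⟩ := exists_isOpen_contDiffOn_of_contDiffAt hg
  have huv : IsOpen (u ∩ v) := hu.inter hv
  have hx : x ∈ u ∩ v := ⟨hxu, hxv⟩
  rw [← iteratedFDerivWithin_of_isOpen n huv hx]
  refine (norm_iteratedFDerivWithin_smul_le (hfu.mono inter_subset_left)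
    (hgv.mono inter_subset_right) huv.uniqueDiffOn hx le_rfl).trans_eq
    (Finset.sum_congr rfl fun m _ => ?_)
  rw [iteratedFDerivWithin_of_isOpen m huv hx, iteratedFDerivWithin_of_isOpen (n - m) huv hx]

lemma norm_iteratedFDeriv_comp_le_of_contDiffAt {g : F → G} {f : E → F} {x : E} {n : ℕ}
    {C D : ℝ} (hg : ContDiffAt 𝕜 n g (f x)) (hf : ContDiffAt 𝕜 n f x)
    (hC : ∀ m ≤ n, ‖iteratedFDeriv 𝕜 m g (f x)‖ ≤ C)
    (hD : ∀ m, 1 ≤ m → m ≤ n → ‖iteratedFDeriv 𝕜 m f x‖ ≤ D ^ m) :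
    ‖iteratedFDeriv 𝕜 n (g ∘ f) x‖ ≤ n.factorial * C * D ^ n := by
  obtain ⟨v, hv, hxv, hgv⟩ := exists_isOpen_contDiffOn_of_contDiffAt hg
  obtain ⟨u, hu, hxu, hfu⟩ := exists_isOpen_contDiffOn_of_contDiffAt hf
  have huv : IsOpen (u ∩ f ⁻¹' v) := hfu.continuousOn.isOpen_inter_preimage hu hv
  have hx : x ∈ u ∩ f ⁻¹' v := ⟨hxu, hxv⟩
  rw [← iteratedFDerivWithin_of_isOpen n huv hx]
  refine norm_iteratedFDerivWithin_comp_le hgv (hfu.mono inter_subset_left) le_rfl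
    hv.uniqueDiffOn huv.uniqueDiffOn (fun y hy => hy.2) hx (fun m hm => ?_) (fun m h1 hm => ?_)
  · rw [iteratedFDerivWithin_of_isOpen m hv hxv]
    exact hC m hm
  · rw [iteratedFDerivWithin_of_isOpen m huv hx]
    exact hD m h1 hm

lemma exists_norm_iteratedFDeriv_le_of_isCompact {f : E → F} {s : Set E} (hs : IsCompact s)
    {n : ℕ} (hf : ∀ x ∈ s, ContDiffAt 𝕜 n f x) :
    ∃ B, ∀ m ≤ n, ∀ x ∈ s, ‖iteratedFDeriv 𝕜 m f x‖ ≤ B := by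
  have hcont : ∀ m ∈ Finset.range (n + 1), ContinuousOn (fun x => ‖iteratedFDeriv 𝕜 m f x‖) s := by
    intro m hm x hx
    have hmn : (0 : ℕ∞ω) + m ≤ n := by
      rw [zero_add]
      exact_mod_cast Nat.lt_succ_iff.1 (Finset.mem_range.1 hm)
    exact ((hf x hx).iteratedFDeriv_right hmn).continuousAt.continuousWithinAt.norm
  obtain ⟨B, hB⟩ := hs.bddAbove_image (continuousOn_finsetSum _ hcont)
  refine ⟨B, fun m hm x hx => ?_⟩
  calc ‖iteratedFDeriv 𝕜 m f x‖ ≤ ∑ m ∈ Finset.range (n + 1), ‖iteratedFDeriv 𝕜 m f x‖ :=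
        Finset.single_le_sum (f := fun m => ‖iteratedFDeriv 𝕜 m f x‖)
          (fun _ _ => norm_nonneg _) (Finset.mem_range.2 (Nat.lt_succ_of_le hm))
    _ ≤ B := hB (mem_image_of_mem _ hx)

lemma contDiff_of_forall_mem_tsupport {f : E → F} {n : ℕ∞ω}
    (hf : ∀ x ∈ tsupport f, ContDiffAt 𝕜 n f x) : ContDiff 𝕜 n f := by
  refine contDiff_iff_contDiffAt.2 fun x => ?_
  by_cases hx : x ∈ tsupport f
  · exact hf x hx
  · exact contDiffAt_const.congr_of_eventuallyEq (notMem_tsupport_iff_eventuallyEq.1 hx)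

end PointwiseBounds

section Inversion

variable {E : Type*} [NormedAddCommGroup E] [InnerProductSpace ℝ E]

lemma inversion_zero_one_apply (v : E) : inversion 0 1 v = (‖v‖ ^ 2)⁻¹ • v := by
  simp [inversion]

lemma contDiffAt_inversion_zero_one {v : E} (hv : v ≠ 0) {n : ℕ∞} :
    ContDiffAt ℝ n (inversion (0 : E) 1) v :=
  contDiffAt_const.inversion contDiffAt_const contDiffAt_id hv

lemma real_inner_inversion_zero_one {v : E} (hv : v ≠ 0) : ⟪v, inversion 0 1 v⟫_ℝ = 1 := by
  rw [inversion_zero_one_apply, real_inner_smul_right, real_inner_self_eq_norm_sq]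
  exact inv_mul_cancel₀ (by simpa using hv)

lemma inversion_zero_one_smul (r : ℝ) (v : E) :
    inversion 0 1 (r • v) = r⁻¹ • inversion 0 1 v := by
  rcases eq_or_ne r 0 with rfl | hr
  · simp
  · simp only [inversion_zero_one_apply, norm_smul, smul_smul, Real.norm_eq_abs, mul_pow, sq_abs]
    congr 1
    field_simp

variable {E' : Type*} [NormedAddCommGroup E'] [NormedSpace ℝ E']

/- Both sides are homogeneous of degree `-1` in `f`, so one may assume `‖f x‖ = 1`; the derivatives
of the inversion are then bounded by compactness of the unit sphere. -/
lemma exists_norm_iteratedFDeriv_inversion_comp_le [FiniteDimensional ℝ E] (n : ℕ) :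
    ∃ B, ∀ (f : E' → E) (x : E') (D : ℝ), ContDiffAt ℝ n f x → f x ≠ 0 →
      (∀ m, 1 ≤ m → m ≤ n → ‖iteratedFDeriv ℝ m f x‖ * ‖f x‖⁻¹ ≤ D ^ m) →
      ‖iteratedFDeriv ℝ n (fun y => inversion 0 1 (f y)) x‖ ≤ B * D ^ n * ‖f x‖⁻¹ := by
  obtain ⟨B, hB⟩ := exists_norm_iteratedFDeriv_le_of_isCompact (n := n)
    (isCompact_sphere (0 : E) 1) fun v hv =>
      contDiffAt_inversion_zero_one (n := n) (ne_zero_of_mem_unit_sphere ⟨v, hv⟩)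
  refine ⟨n.factorial * B, fun f x D hf hfx hD => ?_⟩
  set r := ‖f x‖⁻¹ with hr
  have hr0 : r ≠ 0 := inv_ne_zero (norm_ne_zero_iff.2 hfx)
  have hsphere : r • f x ∈ Metric.sphere (0 : E) 1 := by
    simp [hr, norm_smul, hfx]
  have hrf : ContDiffAt ℝ n (fun y => r • f y) x := contDiffAt_const.smul hf
  have hinv : ContDiffAt ℝ n (inversion (0 : E) 1) (r • f x) :=
    contDiffAt_inversion_zero_one (n := n) (smul_ne_zero hr0 hfx)
  have hscale : (fun y => inversion 0 1 (f y)) =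
      fun y => r • (inversion 0 1 ∘ fun y => r • f y) y := by
    funext y
    rw [Function.comp_apply, inversion_zero_one_smul, smul_inv_smul₀ hr0]
  rw [hscale, iteratedFDeriv_const_smul_apply' (hinv.comp x hrf), norm_smul, mul_comm, hr,
    norm_inv, norm_norm, ← hr]
  gcongr
  refine norm_iteratedFDeriv_comp_le_of_contDiffAt hinv hrf (fun m hm => hB m hm _ hsphere)
    fun m h1 hm => ?_
  rw [iteratedFDeriv_const_smul_apply' (hf.of_le (by exact_mod_cast hm)), norm_smul, mul_comm, hr,
    norm_inv, norm_norm]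
  exact hD m h1 hm

end Inversion

section Symbols

variable {ι E F G : Type*} [NormedAddCommGroup E] [NormedSpace ℝ E]
  [NormedAddCommGroup F] [NormedSpace ℝ F] [NormedAddCommGroup G] [NormedSpace ℝ G]

/-- The family `b` of functions is a symbol of order `k` on `T`: it is smooth there and each
derivative costs one power of the large parameter `L`, i.e. `∂ⁿ b = O(L ^ (k + n))`. The set `T` of
pairs `(i, x)` replaces a family of subsets of `E`, so that uniformity in both the index and the
point is expressed by the single filter `𝓟 T`. -/
structure IsSymbol (T : Set (ι × E)) (L : ι → ℝ) (k : ℕ) (b : ι → E → F) : Prop where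
  contDiffAt : ∀ p ∈ T, ContDiffAt ℝ ∞ (b p.1) p.2
  isBigO : ∀ n : ℕ, (fun p : ι × E => iteratedFDeriv ℝ n (b p.1) p.2) =O[𝓟 T]
    fun p => L p.1 ^ (k + n)

variable {T : Set (ι × E)} {L : ι → ℝ} {k l : ℕ}

lemma IsSymbol.continuousLinearMap_comp {b : ι → E → F} (hb : IsSymbol T L k b) (A : F →L[ℝ] G) :
    IsSymbol T L k fun i x => A (b i x) where
  contDiffAt p hp := (hb.contDiffAt p hp).continuousLinearMap_comp A
  isBigO n := by
    refine IsBigO.trans (IsBigO.of_bound ‖A‖ ?_) (hb.isBigO n)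
    exact eventually_principal.2 fun p hp =>
      A.norm_iteratedFDeriv_comp_left (hb.contDiffAt p hp) (mod_cast le_top)

lemma IsSymbol.smul {c : ι → E → ℝ} {b : ι → E → F} (hc : IsSymbol T L k c)
    (hb : IsSymbol T L l b) : IsSymbol T L (k + l) fun i x => c i x • b i x where
  contDiffAt p hp := (hc.contDiffAt p hp).smul (hb.contDiffAt p hp)
  isBigO n := by
    have leibniz : (fun p : ι × E => iteratedFDeriv ℝ n (fun x => c p.1 x • b p.1 x) p.2)
        =O[𝓟 T] fun p => ∑ m ∈ Finset.range (n + 1), (n.choose m : ℝ) *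
          ‖iteratedFDeriv ℝ m (c p.1) p.2‖ * ‖iteratedFDeriv ℝ (n - m) (b p.1) p.2‖ :=
      IsBigO.of_norm_eventuallyLE <| eventually_principal.2 fun p hp =>
        norm_iteratedFDeriv_smul_le_of_contDiffAt
          ((hc.contDiffAt p hp).of_le (mod_cast le_top))
          ((hb.contDiffAt p hp).of_le (mod_cast le_top))
    refine leibniz.trans (IsBigO.fun_sum fun m hm => ?_)
    have hmn : k + l + n = k + m + (l + (n - m)) := by
      have := Finset.mem_range.1 hm
      lia
    simp only [hmn, pow_add _ (k + m)]
    exact ((hc.isBigO m).norm_left.const_mul_left _).mul (hb.isBigO (n - m)).norm_left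

lemma IsSymbol.sum {κ : Type*} {s : Finset κ} {b : κ → ι → E → F}
    (hb : ∀ j ∈ s, IsSymbol T L k (b j)) : IsSymbol T L k fun i x => ∑ j ∈ s, b j i x where
  contDiffAt p hp := ContDiffAt.sum fun j hj => (hb j hj).contDiffAt p hp
  isBigO n := by
    refine (IsBigO.fun_sum fun j hj => (hb j hj).isBigO n).congr' ?_ EventuallyEq.rfl
    exact eventually_principal.2 fun p hp => (iteratedFDeriv_fun_sum_apply fun j hj =>
      ((hb j hj).contDiffAt p hp).of_le (mod_cast le_top)).symm

lemma IsSymbol.fderiv_apply {b : ι → E → F} (hb : IsSymbol T L k b) (v : E) :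
    IsSymbol T L (k + 1) fun i x => fderiv ℝ (b i) x v where
  contDiffAt p hp := ((hb.contDiffAt p hp).fderiv_right (m := ∞) le_rfl).clm_apply contDiffAt_const
  isBigO n := by
    rw [add_assoc, add_comm 1 n]
    refine IsBigO.trans (IsBigO.of_bound ‖v‖ ?_) (hb.isBigO (n + 1))
    refine eventually_principal.2 fun p hp => ?_
    rw [← norm_iteratedFDeriv_fderiv]
    exact norm_iteratedFDeriv_clm_apply_const
      ((hb.contDiffAt p hp).fderiv_right (m := ∞) le_rfl) (mod_cast le_top)

lemma isSymbol_zero_of_isBigO_one {b : ι → E → F} (hb : ∀ p ∈ T, ContDiffAt ℝ ∞ (b p.1) p.2)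
    (hL : ∀ i, 1 ≤ L i)
    (hbO : ∀ n, (fun p : ι × E => iteratedFDeriv ℝ n (b p.1) p.2) =O[𝓟 T] fun _ => (1 : ℝ)) :
    IsSymbol T L 0 b where
  contDiffAt := hb
  isBigO n := (hbO n).trans <| IsBigO.of_norm_le fun p => by
    rw [norm_one]
    exact one_le_pow₀ (hL p.1)

end Symbols

section VectorField

variable {ι E V : Type*} [NormedAddCommGroup E] [NormedSpace ℝ E]
  [NormedAddCommGroup V] [InnerProductSpace ℝ V]

lemma isSymbol_inversion_comp [FiniteDimensional ℝ V] {T : Set (ι × E)} {L : ι → ℝ}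
    {f : ι → E → V} (hf : ∀ p ∈ T, ContDiffAt ℝ ∞ (f p.1) p.2)
    (hf_deriv : ∀ n ≥ 1, (fun p : ι × E => iteratedFDeriv ℝ n (f p.1) p.2)
      =O[𝓟 T] fun _ => (1 : ℝ))
    (hf_ne : ∀ p ∈ T, f p.1 p.2 ≠ 0)
    (hf_inv : (fun p : ι × E => ‖f p.1 p.2‖⁻¹) =O[𝓟 T] fun p => L p.1)
    (hL : ∀ i, 1 ≤ L i) :
    IsSymbol T L 1 fun i x => inversion 0 1 (f i x) where
  contDiffAt p hp :=
    (contDiffAt_inversion_zero_one (n := ⊤) (hf_ne p hp)).comp p.2 (hf p hp)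
  isBigO n := by
    set D : ι × E → ℝ := fun p =>
      1 + ∑ m ∈ Finset.Icc 1 n, ‖iteratedFDeriv ℝ m (f p.1) p.2‖ * ‖f p.1 p.2‖⁻¹ with hD
    have hone : (fun _ : ι × E => (1 : ℝ)) =O[𝓟 T] fun p => L p.1 :=
      IsBigO.of_norm_le fun p => by simpa only [norm_one] using hL p.1
    have hDO : D =O[𝓟 T] fun p => L p.1 := by
      refine hone.add (IsBigO.fun_sum fun m hm => ?_)
      simpa only [one_mul] using (hf_deriv m (Finset.mem_Icc.1 hm).1).norm_left.mul hf_inv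
    have hD_le : ∀ p m, 1 ≤ m → m ≤ n →
        ‖iteratedFDeriv ℝ m (f p.1) p.2‖ * ‖f p.1 p.2‖⁻¹ ≤ D p ^ m := by
      intro p m h1 hm
      have hsum : ‖iteratedFDeriv ℝ m (f p.1) p.2‖ * ‖f p.1 p.2‖⁻¹ ≤ D p - 1 :=
        (Finset.single_le_sum
          (f := fun m => ‖iteratedFDeriv ℝ m (f p.1) p.2‖ * ‖f p.1 p.2‖⁻¹)
          (fun _ _ => by positivity) (Finset.mem_Icc.2 ⟨h1, hm⟩)).trans_eq (by simp [hD])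
      have hD1 : 1 ≤ D p := le_add_of_nonneg_right (by positivity)
      exact (hsum.trans (sub_le_self _ zero_le_one)).trans (le_self_pow₀ hD1 (by lia))
    obtain ⟨B, hB⟩ := exists_norm_iteratedFDeriv_inversion_comp_le (E := V) (E' := E) n
    have hbound : (fun p : ι × E => iteratedFDeriv ℝ n (fun y => inversion 0 1 (f p.1 y)) p.2)
        =O[𝓟 T] fun p => B * D p ^ n * ‖f p.1 p.2‖⁻¹ :=
      IsBigO.of_norm_eventuallyLE <| eventually_principal.2 fun p hp =>
        hB (f p.1) p.2 (D p) ((hf p hp).of_le (mod_cast le_top)) (hf_ne p hp) (hD_le p)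
    refine hbound.trans ?_
    simp only [add_comm 1 n, pow_succ]
    exact ((hDO.pow n).const_mul_left B).mul hf_inv

end VectorField

section Gradient

variable {ι E : Type*} [NormedAddCommGroup E] [InnerProductSpace ℝ E]

lemma contDiffAt_gradient [CompleteSpace E] {f : E → ℝ} {x : E} (hf : ContDiffAt ℝ ∞ f x) :
    ContDiffAt ℝ ∞ (gradient f) x :=
  (InnerProductSpace.toDual ℝ E).symm.contDiff.contDiffAt.comp x
    (hf.fderiv_right (m := ∞) le_rfl)

lemma norm_gradient [CompleteSpace E] (f : E → ℝ) (x : E) : ‖gradient f x‖ = ‖fderiv ℝ f x‖ :=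
  LinearIsometryEquiv.norm_map _ _

lemma norm_iteratedFDeriv_gradient [CompleteSpace E] (f : E → ℝ) (n : ℕ) (x : E) :
    ‖iteratedFDeriv ℝ n (gradient f) x‖ = ‖iteratedFDeriv ℝ (n + 1) f x‖ := by
  rw [← norm_iteratedFDeriv_fderiv, ← toDual_comp_gradient]
  exact ((InnerProductSpace.toDual ℝ E).norm_iteratedFDeriv_comp_left (gradient f) x n).symm

lemma fderiv_apply_inversion_gradient [CompleteSpace E] {f : E → ℝ} {x : E}
    (hx : fderiv ℝ f x ≠ 0) : fderiv ℝ f x (inversion 0 1 (gradient f x)) = 1 := by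
  rw [← inner_gradient_left]
  refine real_inner_inversion_zero_one (norm_ne_zero_iff.1 ?_)
  rwa [norm_gradient, norm_ne_zero_iff]

variable [FiniteDimensional ℝ E]

lemma exists_isSymbol_fderiv_apply_eq_one {T : Set (ι × E)} {L : ι → ℝ} {φ : ι → E → ℝ}
    (hφ : ∀ p ∈ T, ContDiffAt ℝ ∞ (φ p.1) p.2)
    (hφ_deriv : ∀ n ≥ 2, (fun p : ι × E => iteratedFDeriv ℝ n (φ p.1) p.2)
      =O[𝓟 T] fun _ => (1 : ℝ))
    (hφ_ne : ∀ p ∈ T, fderiv ℝ (φ p.1) p.2 ≠ 0)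
    (hφ_inv : (fun p : ι × E => ‖fderiv ℝ (φ p.1) p.2‖⁻¹) =O[𝓟 T] fun p => L p.1)
    (hL : ∀ i, 1 ≤ L i) :
    ∃ W : ι → E → E, IsSymbol T L 1 W ∧ ∀ p ∈ T, fderiv ℝ (φ p.1) p.2 (W p.1 p.2) = 1 := by
  have := FiniteDimensional.complete ℝ E
  refine ⟨fun i x => inversion 0 1 (gradient (φ i) x), ?_,
    fun p hp => fderiv_apply_inversion_gradient (hφ_ne p hp)⟩
  refine isSymbol_inversion_comp (fun p hp => contDiffAt_gradient (hφ p hp)) (fun n hn => ?_)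
    (fun p hp => norm_ne_zero_iff.1 ?_) ?_ hL
  · refine IsBigO.of_norm_left ?_
    simp only [norm_iteratedFDeriv_gradient]
    exact (hφ_deriv (n + 1) (by lia)).norm_left
  · rw [norm_gradient, norm_ne_zero_iff]
    exact hφ_ne p hp
  · simpa only [norm_gradient] using hφ_inv

end Gradient

section Divergence

variable {E F : Type*} [NormedAddCommGroup E] [NormedSpace ℝ E] [FiniteDimensional ℝ E]
  [NormedAddCommGroup F] [NormedSpace ℝ F]

/-- The divergence of the vector field `b W`, for a vector field `W` and a (possibly vector-valued)
amplitude `b`. It is the formal transpose of the derivative along `W`, up to sign. It is computed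
in the coordinates of an arbitrary fixed basis, on which it does not depend. -/
noncomputable def divSMul (W : E → E) (b : E → F) (x : E) : F :=
  ∑ j, fderiv ℝ (fun y => (finBasis ℝ E).repr (W y) j • b y) x (finBasis ℝ E j)

lemma tsupport_divSMul_subset (W : E → E) (b : E → F) : tsupport (divSMul W b) ⊆ tsupport b := by
  refine closure_minimal (fun x hx => ?_) (isClosed_tsupport b)
  obtain ⟨j, -, hj⟩ := Finset.exists_ne_zero_of_sum_ne_zero hx
  exact tsupport_smul_subset_right _ b (tsupport_fderiv_apply_subset ℝ _ (subset_tsupport _ hj))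

lemma IsSymbol.divSMul {ι : Type*} {T : Set (ι × E)} {L : ι → ℝ} {k l : ℕ} {W : ι → E → E}
    {b : ι → E → F} (hW : IsSymbol T L k W) (hb : IsSymbol T L l b) :
    IsSymbol T L (k + l + 1) fun i => divSMul (W i) (b i) :=
  IsSymbol.sum fun j _ => ((hW.continuousLinearMap_comp
    ((finBasis ℝ E).coord j).toContinuousLinearMap).smul hb).fderiv_apply (finBasis ℝ E j)

lemma contDiff_repr_smul {W : E → E} {b : E → F} {n : ℕ∞ω}
    (hW : ∀ x ∈ tsupport b, ContDiffAt ℝ n W x) (hb : ∀ x ∈ tsupport b, ContDiffAt ℝ n b x)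
    (j : Fin (finrank ℝ E)) :
    ContDiff ℝ n fun x => (finBasis ℝ E).repr (W x) j • b x :=
  contDiff_of_forall_mem_tsupport fun x hx =>
    have hxb : x ∈ tsupport b := tsupport_smul_subset_right _ b hx
    ((hW x hxb).continuousLinearMap_comp
      ((finBasis ℝ E).coord j).toContinuousLinearMap).smul (hb x hxb)

variable [MeasurableSpace E] [BorelSpace E] {μ : Measure E} [μ.IsAddHaarMeasure]
  {𝕜 : Type*} [NormedField 𝕜] [NormedAlgebra ℝ 𝕜] [NormedSpace 𝕜 F] [IsScalarTower ℝ 𝕜 F]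

lemma integral_fderiv_apply_smul {g : E → 𝕜} {W : E → E} {b : E → F}
    (hg : ContDiff ℝ 1 g) (hb_supp : HasCompactSupport b)
    (hW : ∀ x ∈ tsupport b, ContDiffAt ℝ 1 W x) (hb : ∀ x ∈ tsupport b, ContDiffAt ℝ 1 b x) :
    ∫ x, fderiv ℝ g x (W x) • b x ∂μ = -∫ x, g x • divSMul W b x ∂μ := by
  set e := finBasis ℝ E
  set u : Fin (finrank ℝ E) → E → F := fun j x => e.repr (W x) j • b x with hu
  have hu_smooth : ∀ j, ContDiff ℝ 1 (u j) := contDiff_repr_smul hW hb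
  have hu_supp : ∀ j, HasCompactSupport (u j) := fun j => hb_supp.smul_left
  have hg' : ∀ j, Continuous fun x => fderiv ℝ g x (e j) := fun j =>
    (hg.continuous_fderiv one_ne_zero).clm_apply continuous_const
  have hu' : ∀ j, Continuous fun x => fderiv ℝ (u j) x (e j) := fun j =>
    ((hu_smooth j).continuous_fderiv one_ne_zero).clm_apply continuous_const
  have hg'u : ∀ j, Integrable (fun x => fderiv ℝ g x (e j) • u j x) μ := fun j =>
    ((hg' j).smul (hu_smooth j).continuous).integrable_of_hasCompactSupport (hu_supp j).smul_left
  have hgu' : ∀ j, Integrable (fun x => g x • fderiv ℝ (u j) x (e j)) μ := fun j =>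
    (hg.continuous.smul (hu' j)).integrable_of_hasCompactSupport
      ((hu_supp j).fderiv_apply ℝ _).smul_left
  have hgu : ∀ j, Integrable (fun x => g x • u j x) μ := fun j =>
    (hg.continuous.smul (hu_smooth j).continuous).integrable_of_hasCompactSupport
      (hu_supp j).smul_left
  have parts : ∀ j, ∫ x, g x • fderiv ℝ (u j) x (e j) ∂μ =
      -∫ x, fderiv ℝ g x (e j) • u j x ∂μ := fun j =>
    integral_smul_fderiv_eq_neg_fderiv_smul_of_integrable (hg'u j) (hgu' j) (hgu j)
      (fun x _ => hg.differentiable one_ne_zero x)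
      (fun x _ => (hu_smooth j).differentiable one_ne_zero x)
  have expand : ∀ x, fderiv ℝ g x (W x) • b x = ∑ j, fderiv ℝ g x (e j) • u j x := fun x => by
    conv_lhs => rw [← e.sum_repr (W x), map_sum, Finset.sum_smul]
    refine Finset.sum_congr rfl fun j _ => ?_
    rw [map_smul, smul_assoc, hu, smul_comm]
  simp only [expand, divSMul, Finset.smul_sum]
  rw [integral_finsetSum _ fun j _ => hg'u j, integral_finsetSum _ fun j _ => hgu' j,
    ← Finset.sum_neg_distrib]
  exact Finset.sum_congr rfl fun j _ => (neg_eq_iff_eq_neg.2 (parts j)).symm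

end Divergence

section Oscillation

/-- The oscillating factor `exp (i φ / h)` of phase `φ` and semiclassical parameter `h`. -/
noncomputable def oscillation {X : Type*} (φ : X → ℝ) (h : ℝ) (x : X) : ℂ := exp (I * φ x / h)

lemma norm_oscillation {X : Type*} (φ : X → ℝ) (h : ℝ) (x : X) : ‖oscillation φ h x‖ = 1 := by
  have hreal : I * φ x / h = ((φ x / h : ℝ) : ℂ) * I := by
    push_cast
    ring
  rw [oscillation, hreal, norm_exp_ofReal_mul_I]

variable {F : Type*} [NormedAddCommGroup F] [NormedSpace ℂ F]

lemma norm_integral_oscillation_smul_le {X : Type*} [MeasurableSpace X] {μ : Measure X}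
    {s : Set X} (hs : μ s < ⊤) {b : X → F} {C : ℝ} (hbs : ∀ x, x ∉ s → b x = 0)
    (hb : ∀ x ∈ s, ‖b x‖ ≤ C) (φ : X → ℝ) (h : ℝ) :
    ‖∫ x, oscillation φ h x • b x ∂μ‖ ≤ C * μ.real s := by
  rw [← setIntegral_eq_integral_of_forall_compl_eq_zero fun x hx => by rw [hbs x hx, smul_zero]]
  refine norm_setIntegral_le_of_norm_le_const hs fun x hx => ?_
  rw [norm_smul, norm_oscillation, one_mul]
  exact hb x hx

variable {E : Type*} [NormedAddCommGroup E] [NormedSpace ℝ E]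

lemma contDiff_oscillation {φ : E → ℝ} {n : ℕ∞ω} (hφ : ContDiff ℝ n φ) (h : ℝ) :
    ContDiff ℝ n (oscillation φ h) :=
  ((contDiff_const.mul (ofRealCLM.contDiff.comp hφ)).div_const _).cexp

lemma fderiv_oscillation_apply {φ : E → ℝ} {x : E} (hφ : DifferentiableAt ℝ φ x) (h : ℝ) (v : E) :
    fderiv ℝ (oscillation φ h) x v = I / h * fderiv ℝ φ x v * oscillation φ h x := by
  have hosc : oscillation φ h = fun y => exp (I / h * φ y) := by
    funext y
    rw [oscillation, mul_div_right_comm]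
  have hderiv := ((ofRealCLM.hasFDerivAt.comp x hφ.hasFDerivAt).const_mul (I / (h : ℂ))).cexp
  rw [hosc]
  refine (DFunLike.congr_fun hderiv.fderiv v).trans ?_
  simp only [smul_apply, ContinuousLinearMap.comp_apply, ofRealCLM_apply,
    smul_eq_mul, Function.comp_apply]
  ring

variable [FiniteDimensional ℝ E] [MeasurableSpace E] [BorelSpace E] {μ : Measure E}

lemma integral_oscillation_smul_eq_divSMul [μ.IsAddHaarMeasure] {φ : E → ℝ} {h : ℝ} {W : E → E}
    {b : E → F} (hφ : ContDiff ℝ 1 φ) (hh : h ≠ 0) (hb_supp : HasCompactSupport b)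
    (hW : ∀ x ∈ tsupport b, ContDiffAt ℝ 1 W x) (hb : ∀ x ∈ tsupport b, ContDiffAt ℝ 1 b x)
    (hφW : ∀ x ∈ tsupport b, fderiv ℝ φ x (W x) = 1) :
    ∫ x, oscillation φ h x • b x ∂μ =
      (I * h) • ∫ x, oscillation φ h x • divSMul W b x ∂μ := by
  have hderiv : ∀ x, oscillation φ h x • b x =
      (-I * h) • (fderiv ℝ (oscillation φ h) x (W x) • b x) := fun x => by
    by_cases hx : x ∈ tsupport b
    · rw [fderiv_oscillation_apply (hφ.differentiable one_ne_zero x), hφW x hx, smul_smul]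
      congr 1
      have hh' : (h : ℂ) ≠ 0 := ofReal_ne_zero.2 hh
      field_simp
      simp
    · simp [image_eq_zero_of_notMem_tsupport hx]
  simp only [hderiv]
  rw [integral_smul, integral_fderiv_apply_smul (contDiff_oscillation hφ h) hb_supp hW hb]
  simp

variable {ι : Type*} {T : Set (ι × E)} {L h : ι → ℝ} {k : ℕ} {b : ι → E → F} {K : Set E}

lemma isBigO_integral_oscillation [μ.IsAddHaarMeasure] {φ : ι → E → ℝ} {W : ι → E → E}
    (hK : IsCompact K) (hφ : ∀ i, ContDiff ℝ 1 (φ i)) (hh : ∀ i, h i ≠ 0)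
    (hW : IsSymbol T L 1 W) (hφW : ∀ p ∈ T, fderiv ℝ (φ p.1) p.2 (W p.1 p.2) = 1)
    (hbK : ∀ i, tsupport (b i) ⊆ K) (hbT : ∀ i, ∀ x ∈ tsupport (b i), (i, x) ∈ T)
    (hb : IsSymbol T L k b) (m : ℕ) :
    (fun i => ∫ x, oscillation (φ i) (h i) x • b i x ∂μ) =O[⊤]
      fun i => h i ^ m * L i ^ (k + 2 * m) := by
  induction m generalizing k b with
  | zero =>
    obtain ⟨M, hM⟩ := isBigO_principal.1 (hb.isBigO 0)
    refine isBigO_top.2 ⟨|M| * μ.real K, fun i => ?_⟩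
    have hzero : ∀ x, x ∉ tsupport (b i) → b i x = 0 := fun x => image_eq_zero_of_notMem_tsupport
    refine (norm_integral_oscillation_smul_le hK.measure_lt_top (C := |M| * ‖L i ^ k‖)
      (fun x hx => hzero x fun hxb => hx (hbK i hxb)) (fun x _ => ?_) (φ i) (h i)).trans_eq ?_
    · by_cases hx : x ∈ tsupport (b i)
      · have hMx := hM (i, x) (hbT i x hx)
        rw [norm_iteratedFDeriv_zero, add_zero] at hMx
        exact hMx.trans (by gcongr; exact le_abs_self M)
      · rw [hzero x hx, norm_zero]
        positivity
    · rw [pow_zero, one_mul, mul_zero, add_zero]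
      ring
  | succ m ih =>
    have hstep : ∀ i, ∫ x, oscillation (φ i) (h i) x • b i x ∂μ =
        (I * h i) • ∫ x, oscillation (φ i) (h i) x • divSMul (W i) (b i) x ∂μ := fun i =>
      integral_oscillation_smul_eq_divSMul (hφ i) (hh i)
        (hK.of_isClosed_subset (isClosed_tsupport _) (hbK i))
        (fun x hx => (hW.contDiffAt _ (hbT i x hx)).of_le (mod_cast le_top))
        (fun x hx => (hb.contDiffAt _ (hbT i x hx)).of_le (mod_cast le_top))
        (fun x hx => hφW _ (hbT i x hx))
    have hdiv := fun i => tsupport_divSMul_subset (W i) (b i)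
    have hrec := ih (fun i => (hdiv i).trans (hbK i))
      (fun i x hx => hbT i x (hdiv i hx)) (hW.divSMul hb)
    have hfactor : (fun i => I * (h i : ℂ)) =O[⊤] h :=
      IsBigO.of_bound 1 (Eventually.of_forall fun i => by simp)
    simp only [hstep]
    refine (hfactor.smul hrec).congr_right fun i => ?_
    rw [smul_eq_mul, show 1 + k + 1 + 2 * m = k + 2 * (m + 1) by ring]
    ring

end Oscillation

section Decay

variable {E F : Type*} [NormedAddCommGroup E] [InnerProductSpace ℝ E] [FiniteDimensional ℝ E]
  [MeasurableSpace E] [BorelSpace E] {μ : Measure E} [μ.IsAddHaarMeasure]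
  [NormedAddCommGroup F] [NormedSpace ℂ F] {K : Set E} {C : ℝ}

lemma isBigO_integral_oscillation_of_le_mul_norm_fderiv {ι : Type*} {L h : ι → ℝ}
    {b : ι → E → F} {φ : ι → E → ℝ} {T : Set (ι × E)} (hT : T = {p | p.2 ∈ tsupport (b p.1)})
    (hK : IsCompact K) (hbK : ∀ i, tsupport (b i) ⊆ K) (hh : ∀ i, h i ≠ 0) (hL : ∀ i, 1 ≤ L i)
    (hb : ∀ i, ContDiff ℝ ∞ (b i)) (hφ : ∀ i, ContDiff ℝ ∞ (φ i))
    (hb_deriv : ∀ n, (fun p : ι × E => iteratedFDeriv ℝ n (b p.1) p.2)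
      =O[𝓟 T] fun _ => (1 : ℝ))
    (hφ_deriv : ∀ n ≥ 2, (fun p : ι × E => iteratedFDeriv ℝ n (φ p.1) p.2)
      =O[𝓟 T] fun _ => (1 : ℝ))
    (hC : 0 < C) (hφ_grad : ∀ p ∈ T, C ≤ L p.1 * ‖fderiv ℝ (φ p.1) p.2‖) (m : ℕ) :
    (fun i => ∫ x, oscillation (φ i) (h i) x • b i x ∂μ) =O[⊤]
      fun i => h i ^ m * L i ^ (2 * m) := by
  have hφ_pos : ∀ p ∈ T, 0 < ‖fderiv ℝ (φ p.1) p.2‖ := fun p hp =>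
    pos_of_mul_pos_right (hC.trans_le (hφ_grad p hp)) (zero_le_one.trans (hL p.1))
  have hφ_inv : (fun p : ι × E => ‖fderiv ℝ (φ p.1) p.2‖⁻¹) =O[𝓟 T] fun p => L p.1 := by
    refine IsBigO.of_bound C⁻¹ (eventually_principal.2 fun p hp => ?_)
    rw [norm_inv, norm_norm, inv_mul_eq_div, le_div_iff₀ hC, inv_mul_le_iff₀ (hφ_pos p hp),
      mul_comm]
    exact (hφ_grad p hp).trans (by gcongr; exact Real.le_norm_self _)
  obtain ⟨W, hW, hφW⟩ := exists_isSymbol_fderiv_apply_eq_one (fun p _ => (hφ p.1).contDiffAt)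
    hφ_deriv (fun p hp => norm_pos_iff.1 (hφ_pos p hp)) hφ_inv hL
  have hb_symbol : IsSymbol T L 0 b :=
    isSymbol_zero_of_isBigO_one (fun p _ => (hb p.1).contDiffAt) hL hb_deriv
  simpa only [zero_add] using isBigO_integral_oscillation hK
    (fun i => (hφ i).of_le (mod_cast le_top)) hh hW hφW hbK (fun i x hx => hT ▸ hx) hb_symbol m

end Decay

section Scales

lemma le_norm_fderiv_of_mem_tsupport {E F : Type*} [NormedAddCommGroup E] [NormedSpace ℝ E]
    [Zero F] {b : E → F} {f : E → ℝ} {C : ℝ} (hf : ContDiff ℝ 1 f)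
    (hC : ∀ x ∈ Function.support b, C ≤ ‖fderiv ℝ f x‖) {x : E} (hx : x ∈ tsupport b) :
    C ≤ ‖fderiv ℝ f x‖ :=
  closure_minimal hC
    (isClosed_le continuous_const (hf.continuous_fderiv one_ne_zero).norm) hx

variable {h δ : ℝ}

lemma le_rpow_mul_of_mul_rpow_le {ε C r : ℝ} (h_pos : 0 < h) (h_le : h ≤ 1) (hδε : δ ≤ ε)
    (hr : 0 ≤ r) (hC : C * h ^ ((1 : ℝ) / 2 - ε) ≤ r) : C ≤ h ^ (δ - 1 / 2) * r :=
  calc C = h ^ (ε - 1 / 2) * (C * h ^ ((1 : ℝ) / 2 - ε)) := by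
        rw [mul_left_comm, ← Real.rpow_add h_pos, sub_add_sub_cancel, sub_self, Real.rpow_zero,
          mul_one]
    _ ≤ h ^ (ε - 1 / 2) * r := by gcongr
    _ ≤ h ^ (δ - 1 / 2) * r := mul_le_mul_of_nonneg_right
        (Real.rpow_le_rpow_of_exponent_ge h_pos h_le (sub_le_sub_right hδε _)) hr

lemma pow_mul_rpow_pow_le {m N : ℕ} (h_pos : 0 < h) (h_le : h ≤ 1) (hm : N ≤ m * (2 * δ)) :
    h ^ m * (h ^ (δ - 1 / 2)) ^ (2 * m) ≤ h ^ N := by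
  rw [← Real.rpow_mul_natCast h_pos.le, ← Real.rpow_natCast h m, ← Real.rpow_add h_pos,
    ← Real.rpow_natCast h N]
  refine Real.rpow_le_rpow_of_exponent_ge h_pos h_le (hm.trans_eq ?_)
  push_cast
  ring

end Scales

end NonstationaryPhase

open NonstationaryPhase Asymptotics Filter in
theorem nonstationary_phase_general {E F : Type*} [NormedAddCommGroup E] [InnerProductSpace ℝ E]
    [FiniteDimensional ℝ E] [MeasurableSpace E] [BorelSpace E] (μ : Measure E)
    [μ.IsAddHaarMeasure] [NormedAddCommGroup F] [NormedSpace ℂ F]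
    {K : Set E} (hK : IsCompact K) {h₀ ε C : ℝ} (hh₀ : h₀ ≤ 1) (hε : 0 < ε) (hC : 0 < C)
    {a : ℝ → E → F} {φ : ℝ → E → ℝ}
    (ha_smooth : ∀ h ∈ Set.Ioc 0 h₀, ContDiff ℝ (⊤ : ℕ∞) (a h))
    (hφ_smooth : ∀ h ∈ Set.Ioc 0 h₀, ContDiff ℝ (⊤ : ℕ∞) (φ h))
    (ha_supp : ∀ h ∈ Set.Ioc 0 h₀, Function.support (a h) ⊆ K)
    (ha_bound : ∀ n, ∃ M, ∀ h ∈ Set.Ioc 0 h₀, ∀ x, ‖iteratedFDeriv ℝ n (a h) x‖ ≤ M)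
    (hφ_bound : ∀ n ≥ 2, ∃ M, ∀ h ∈ Set.Ioc 0 h₀, ∀ x ∈ K, ‖iteratedFDeriv ℝ n (φ h) x‖ ≤ M)
    (hgrad : ∀ h ∈ Set.Ioc 0 h₀, ∀ x ∈ Function.support (a h),
      C * h ^ ((1 : ℝ) / 2 - ε) ≤ ‖fderiv ℝ (φ h) x‖) (N : ℕ) :
    ∃ CN > 0, ∀ h ∈ Set.Ioc 0 h₀, ‖∫ x, exp (I * φ h x / h) • a h x ∂μ‖ ≤ CN * h ^ N := by
  set δ := min ε (1 / 2)
  have hδ : 0 < δ := lt_min hε one_half_pos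
  have haK (i : Set.Ioc 0 h₀) : tsupport (a i) ⊆ K :=
    closure_minimal (ha_supp i i.2) hK.isClosed
  have hL (i : Set.Ioc 0 h₀) : 1 ≤ (i : ℝ) ^ (δ - 1 / 2) :=
    Real.one_le_rpow_of_pos_of_le_one_of_nonpos i.2.1 (i.2.2.trans hh₀)
      (sub_nonpos.2 (min_le_right _ _))
  have hφ_grad (i : Set.Ioc 0 h₀) (x : E) (hx : x ∈ tsupport (a i)) :
      C ≤ (i : ℝ) ^ (δ - 1 / 2) * ‖fderiv ℝ (φ i) x‖ :=
    le_rpow_mul_of_mul_rpow_le i.2.1 (i.2.2.trans hh₀) (min_le_left _ _) (norm_nonneg _)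
      (le_norm_fderiv_of_mem_tsupport ((hφ_smooth i i.2).of_le (mod_cast le_top)) (hgrad i i.2) hx)
  obtain ⟨m, hm⟩ := exists_nat_ge ((N : ℝ) / (2 * δ))
  rw [div_le_iff₀ (mul_pos two_pos hδ)] at hm
  have decay := isBigO_integral_oscillation_of_le_mul_norm_fderiv (μ := μ)
    (ι := Set.Ioc 0 h₀) (h := (↑)) rfl hK haK (fun i => i.2.1.ne') hL
    (fun i => ha_smooth i i.2) (fun i => hφ_smooth i i.2)
    (fun n => (ha_bound n).elim fun M hM => IsBigO.of_bound M <| eventually_principal.2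
      fun p _ => by simpa using hM p.1 p.1.2 p.2)
    (fun n hn => (hφ_bound n hn).elim fun M hM => IsBigO.of_bound M <| eventually_principal.2
      fun p hp => by simpa using hM p.1 p.1.2 p.2 (haK p.1 hp))
    hC (fun p hp => hφ_grad p.1 p.2 hp) m
  obtain ⟨CN, hCN, hbound⟩ := decay.exists_pos
  refine ⟨CN, hCN, fun h hh => (isBigOWith_top.1 hbound ⟨h, hh⟩).trans ?_⟩
  have h_pos := hh.1
  rw [Real.norm_of_nonneg (by positivity)]
  gcongr
  exact pow_mul_rpow_pow_le h_pos (hh.2.trans hh₀) hm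

/-- **Non-stationary phase with `h`-dependent phase** (Proposition A.1).
If the amplitudes `a (·, h)` are smooth, supported in a fixed compact set `K`,
with seminorms bounded uniformly in `h`, the phases `φ (·, h)` are smooth with
seminorms bounded uniformly in `h` on `K`, and the phase gradient satisfies
`|∇φ| ≥ C h^(1/2 - ε)` on the support of the amplitude, then the oscillatory
integral `∫ a e^{iφ/h}` is `O(h^∞)`. -/
theorem nonstationary_phase
    (d : ℕ) (hd : 1 ≤ d)
    (K : Set (EuclideanSpace ℝ (Fin d))) (hK : IsCompact K)
    (h₀ ε C : ℝ) (hh₀ : h₀ ∈ Set.Ioc (0:ℝ) 1) (hε : 0 < ε) (hC : 0 < C)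
    (a : ℝ → EuclideanSpace ℝ (Fin d) → ℂ)
    (φ : ℝ → EuclideanSpace ℝ (Fin d) → ℝ)
    (ha_smooth : ∀ h ∈ Set.Ioc (0:ℝ) h₀, ContDiff ℝ (⊤ : ℕ∞) (a h))
    (hφ_smooth : ∀ h ∈ Set.Ioc (0:ℝ) h₀, ContDiff ℝ (⊤ : ℕ∞) (φ h))
    (ha_supp : ∀ h ∈ Set.Ioc (0:ℝ) h₀, Function.support (a h) ⊆ K)
    (ha_bound : ∀ n : ℕ, ∃ M : ℝ, ∀ h ∈ Set.Ioc (0:ℝ) h₀, ∀ x,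
        ‖iteratedFDeriv ℝ n (a h) x‖ ≤ M)
    (hφ_bound : ∀ n : ℕ, ∃ M : ℝ, ∀ h ∈ Set.Ioc (0:ℝ) h₀, ∀ x ∈ K,
        ‖iteratedFDeriv ℝ n (φ h) x‖ ≤ M)
    (hgrad : ∀ h ∈ Set.Ioc (0:ℝ) h₀, ∀ x ∈ Function.support (a h),
        C * h ^ ((1:ℝ)/2 - ε) ≤ ‖gradient (φ h) x‖) :
    ∀ N : ℕ, ∃ CN > 0, ∀ h ∈ Set.Ioc (0:ℝ) h₀,
      ‖∫ x, a h x * Complex.exp (Complex.I * (φ h x : ℂ) / (h : ℂ))‖ ≤ CN * h ^ N := by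
  simpa only [smul_eq_mul, mul_comm] using nonstationary_phase_general volume hK hh₀.2 hε hC
    ha_smooth hφ_smooth ha_supp ha_bound (fun n _ => hφ_bound n)
    (by simpa only [NonstationaryPhase.norm_gradient] using hgrad)
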